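/- arXiv:2212.00699 — 3 statements merged into one kernel-verified Lean document; each statement's English description precedes it below -/
import Mathlib

section
/- In the two-player game G constructed from an X3C instance, let 𝒱 be a payment promise with 𝒳⋆_{G[𝒱]} ⊆ O_1 × O_2 and cost(𝒱) = 0, and let C_j ∈ 𝒞 and a_i ∈ C_j be such that c_j^{a_i} is undominated for player 2 in G[𝒱]. Then: (i) c_j^{a_i} is undominated for player 1 in G[𝒱]; (ii) c_j^{a_i} dominates a_i for player 1 in G[𝒱]; (iii) for every set C_l ∈ 𝒞 ∖ {C_j} with a_i ∈ C_l, the strategy c_l^{a_i} is dominated for player 2 in G[𝒱]. -/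
/-!
Let `c_j^a` be undominated for player 2. The strategy `a` lies outside `O_1`, so the profile
`(a, c_j^a)` cannot be undominated: `a` is dominated for player 1 and, strategy sets being finite,
even by an undominated `d`, which must lie in `O_1`. The payments at the undominated profile
`(d, c_j^a)` sum to at most the cost, so `2 = U_1(a, c_j^a) ≤ U_1(d, c_j^a) + cost`. The other
strategies of `O_1` have utility at most `1` against `c_j^a`, so a cost below `1` forces
`d = c_j^a`. If `c_l^a` is undominated for player 2 as well, the same `d` must equal `c_l^a`,
and so `l = j`.
-/

/-- In a game with player set `ι` and strategy sets `S i`, strategy `x` of player `i`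
(weakly) dominates strategy `y`: `x` is at least as good against every profile of the
other players' strategies and strictly better against at least one. -/
def Dominates {ι : Type*} [DecidableEq ι] {S : ι → Type*}
    (U : ι → (∀ j, S j) → ℝ) (i : ι) (x y : S i) : Prop :=
  (∀ σ : ∀ j, S j, U i (Function.update σ i y) ≤ U i (Function.update σ i x)) ∧
  (∃ σ : ∀ j, S j, U i (Function.update σ i y) < U i (Function.update σ i x))

/-- A strategy of player `i` is undominated if no strategy of player `i` dominates it. -/
def Undominated {ι : Type*} [DecidableEq ι] {S : ι → Type*}
    (U : ι → (∀ j, S j) → ℝ) (i : ι) (x : S i) : Prop :=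
  ¬ ∃ y : S i, Dominates U i y x

/-- The set `𝒳⋆` of strategy profiles consisting entirely of undominated strategies. -/
def UndomProfiles {ι : Type*} [DecidableEq ι] {S : ι → Type*}
    (U : ι → (∀ j, S j) → ℝ) : Set (∀ j, S j) :=
  {σ | ∀ i, Undominated U i (σ i)}

/-- The cost of a payment promise `V` for the game with utilities `U`:
the maximum, over undominated profiles of the modified game `G[V]`,
of the total payment. -/
noncomputable def gameCost {ι : Type*} [DecidableEq ι] [Fintype ι] {S : ι → Type*}
    (U V : ι → (∀ j, S j) → ℝ) : ℝ :=
  sSup ((fun σ => ∑ i, V i σ) '' UndomProfiles (fun i σ => U i σ + V i σ))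

/-- The rectangular strategy-profile region `O_1 × ⋯ × O_n`. -/
def rectSet {ι : Type*} {S : ι → Type*} (O : ∀ i, Set (S i)) : Set (∀ j, S j) :=
  {σ | ∀ i, σ i ∈ O i}

/-- `S` is an exact cover of the X3C instance with `3 * nh` elements (indexed by
`ZMod m`, `m = 3 * nh`) and sets `C`: `|S| = nh` and every element is covered. -/
def IsExactCover (m nh : ℕ) (C : ZMod m → Finset (ZMod m)) (S : Set (ZMod m)) : Prop :=
  S.ncard = nh ∧ ∀ a : ZMod m, ∃ j ∈ S, a ∈ C j

/-- The common strategy set of the two players: an element strategy `a_i` (left) or a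
strategy `c_j^{a_i}` for a set `C_j` and an element `a_i ∈ C_j` (right). -/
def X3CStrat (m : ℕ) (C : ZMod m → Finset (ZMod m)) : Type :=
  ZMod m ⊕ {p : ZMod m × ZMod m // p.2 ∈ C p.1}

/-- Utility of player 1 (first argument is player 1's strategy):
`U_1(a_i, c_j^{a_i}) = 2` and `U_1(a_i, c_j^{a_m}) = 1` for `a_m ∈ C_j ∖ {a_i}`
(whenever `a_i ∈ C_j`), `U_1(c_j^{a_i}, c_j^{a_i}) = 2` and
`U_1(c_j^{a_i}, c_j^{a_m}) = 1` for `a_m ∈ C_j ∖ {a_i}`; all other values are 0. -/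
def xU1 (m : ℕ) (C : ZMod m → Finset (ZMod m)) :
    X3CStrat m C → X3CStrat m C → ℝ
  | Sum.inl a, Sum.inr p => if a ∈ C p.1.1 then (if p.1.2 = a then 2 else 1) else 0
  | Sum.inr q, Sum.inr p =>
      if p.1.1 = q.1.1 then (if p.1.2 = q.1.2 then 2 else 1) else 0
  | _, _ => 0

/-- Utility of player 2 (first argument is player 1's strategy):
`U_2(c_p^{a_{i-1}}, a_i) = 1` and `U_2(c_p^{a_{i-1}}, c_j^{a_i}) = 1`
(indices mod `3 nh`); all other values are 0. -/
def xU2 (m : ℕ) (C : ZMod m → Finset (ZMod m)) :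
    X3CStrat m C → X3CStrat m C → ℝ
  | Sum.inr q, Sum.inl a => if q.1.2 = a - 1 then 1 else 0
  | Sum.inr q, Sum.inr p => if q.1.2 = p.1.2 - 1 then 1 else 0
  | _, _ => 0

/-- The two-player game built from the X3C instance. -/
def xGame (m : ℕ) (C : ZMod m → Finset (ZMod m)) :
    Fin 2 → (Fin 2 → X3CStrat m C) → ℝ :=
  fun i σ => if i = 0 then xU1 m C (σ 0) (σ 1) else xU2 m C (σ 0) (σ 1)

/-- The desired strategy set `O_1 = O_2 = {c_j^{a_i} : C_j ∈ 𝒞, a_i ∈ C_j}`. -/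
def xDesired (m : ℕ) (C : ZMod m → Finset (ZMod m)) : Set (X3CStrat m C) :=
  Set.range Sum.inr

section Game

variable {ι : Type*} [DecidableEq ι] {S : ι → Type*} {U V : ι → (∀ j, S j) → ℝ} {i : ι}

instance Dominates.isStrictOrder : IsStrictOrder (S i) (Dominates U i) where
  irrefl _ h := h.2.elim fun _ => lt_irrefl _
  trans _ _ _ hxy hyz :=
    ⟨fun σ => (hyz.1 σ).trans (hxy.1 σ), hxy.2.imp fun σ hσ => (hyz.1 σ).trans_lt hσ⟩

theorem exists_undominated_dominates [Finite (S i)] {y : S i} (hy : ¬ Undominated U i y) :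
    ∃ d, Undominated U i d ∧ Dominates U i d y := by
  have wf : WellFounded (Dominates U i) := Finite.wellFounded_of_trans_of_irrefl _
  obtain ⟨d, hdy, hmax⟩ := wf.has_min {z | Dominates U i z y} (not_not.mp hy)
  exact ⟨d, fun ⟨z, hzd⟩ => hmax z (trans_of (Dominates U i) hzd hdy) hzd, hdy⟩

theorem update_mem_undomProfiles {σ : ∀ j, S j} {x : S i} (hx : Undominated U i x)
    (hσ : ∀ k ≠ i, Undominated U k (σ k)) : Function.update σ i x ∈ UndomProfiles U :=
  (Function.forall_update_iff σ fun k y => Undominated U k y).mpr ⟨hx, hσ⟩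

theorem exists_mem_undominated_dominates_of_notMem [Finite (S i)] {O : ∀ j, Set (S j)}
    (himpl : UndomProfiles U ⊆ rectSet O) {σ : ∀ j, S j}
    (hσ : ∀ k ≠ i, Undominated U k (σ k)) {x : S i} (hx : x ∉ O i) :
    ∃ d ∈ O i, Undominated U i d ∧ Dominates U i d x := by
  have mem_of_undominated {y : S i} (hy : Undominated U i y) : y ∈ O i := by
    simpa only [Function.update_self] using himpl (update_mem_undomProfiles hy hσ) i
  obtain ⟨d, hd, hdx⟩ := exists_undominated_dominates (mt mem_of_undominated hx)
  exact ⟨d, mem_of_undominated hd, hd, hdx⟩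

theorem payment_le_gameCost [Fintype ι] [Finite (∀ j, S j)] (hV : ∀ i σ, 0 ≤ V i σ)
    {σ : ∀ j, S j} (hσ : σ ∈ UndomProfiles (U + V)) (i : ι) : V i σ ≤ gameCost U V :=
  calc
    V i σ ≤ ∑ k, V k σ := Finset.single_le_sum (fun k _ => hV k σ) (Finset.mem_univ i)
    _ ≤ gameCost U V := le_csSup (Set.toFinite _).bddAbove ⟨σ, hσ, rfl⟩

theorem Dominates.utility_le_add_gameCost [Fintype ι] [Finite (∀ j, S j)]
    (hV : ∀ i σ, 0 ≤ V i σ) {x y : S i} (hxy : Dominates (U + V) i x y) {σ : ∀ j, S j}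
    (hσ : Function.update σ i x ∈ UndomProfiles (U + V)) :
    U i (Function.update σ i y) ≤ U i (Function.update σ i x) + gameCost U V :=
  calc
    U i (Function.update σ i y)
      ≤ U i (Function.update σ i y) + V i (Function.update σ i y) :=
        le_add_of_nonneg_right (hV i _)
    _ ≤ U i (Function.update σ i x) + V i (Function.update σ i x) := hxy.1 σ
    _ ≤ U i (Function.update σ i x) + gameCost U V := by
        gcongr
        exact payment_le_gameCost hV hσ i

end Game

section X3C

variable {m : ℕ} {C : ZMod m → Finset (ZMod m)}

instance X3CStrat.instFinite [NeZero m] : Finite (X3CStrat m C) :=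
  inferInstanceAs (Finite (ZMod m ⊕ {p : ZMod m × ZMod m // p.2 ∈ C p.1}))

theorem xU1_inl_inr_self {j a : ZMod m} (ha : a ∈ C j) :
    xU1 m C (Sum.inl a) (Sum.inr ⟨(j, a), ha⟩) = 2 := by
  simp [xU1, ha]

theorem eq_of_one_lt_xU1 {q p : {p : ZMod m × ZMod m // p.2 ∈ C p.1}}
    (h : 1 < xU1 m C (Sum.inr q) (Sum.inr p)) : q = p := by
  simp only [xU1] at h
  split_ifs at h with hset helt
  · exact Subtype.ext (Prod.ext hset.symm helt.symm)
  all_goals norm_num at h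

variable [NeZero m] {U V : Fin 2 → (Fin 2 → X3CStrat m C) → ℝ}

theorem Dominates.xU1_le_add_gameCost (hU : ∀ σ, U 0 σ = xU1 m C (σ 0) (σ 1))
    (hV : ∀ i σ, 0 ≤ V i σ) {x y c : X3CStrat m C} (hxy : Dominates (U + V) 0 x y)
    (hx : Undominated (U + V) 0 x) (hc : Undominated (U + V) 1 c) :
    xU1 m C y c ≤ xU1 m C x c + gameCost U V := by
  have hmem : Function.update (fun _ => c) 0 x ∈ UndomProfiles (U + V) :=
    update_mem_undomProfiles hx (by simpa [Fin.forall_fin_two] using hc)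
  simpa [hU] using hxy.utility_le_add_gameCost hV hmem

theorem eq_of_undominated_of_dominates_inl (hU : ∀ σ, U 0 σ = xU1 m C (σ 0) (σ 1))
    (hV : ∀ i σ, 0 ≤ V i σ) (hcost : gameCost U V < 1)
    {q : {p : ZMod m × ZMod m // p.2 ∈ C p.1}} {j a : ZMod m} (ha : a ∈ C j)
    (hq : Undominated (U + V) 0 (Sum.inr q))
    (hqa : Dominates (U + V) 0 (Sum.inr q) (Sum.inl a))
    (hund : Undominated (U + V) 1 (Sum.inr ⟨(j, a), ha⟩)) : q = ⟨(j, a), ha⟩ := by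
  have hle := hqa.xU1_le_add_gameCost hU hV hq hund
  rw [xU1_inl_inr_self] at hle
  exact eq_of_one_lt_xU1 (by linarith)

theorem x3c_claim1_general (hU : ∀ σ, U 0 σ = xU1 m C (σ 0) (σ 1))
    (hV : ∀ i σ, 0 ≤ V i σ)
    (himpl : UndomProfiles (U + V) ⊆ rectSet (fun _ : Fin 2 => xDesired m C))
    (hcost : gameCost U V < 1) {j a : ZMod m} (ha : a ∈ C j)
    (hund : Undominated (U + V) 1 (Sum.inr ⟨(j, a), ha⟩)) :
    Undominated (U + V) 0 (Sum.inr ⟨(j, a), ha⟩) ∧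
      Dominates (U + V) 0 (Sum.inr ⟨(j, a), ha⟩) (Sum.inl a) ∧
      ∀ l : ZMod m, l ≠ j → ∀ hl : a ∈ C l,
        ¬ Undominated (U + V) 1 (Sum.inr ⟨(l, a), hl⟩) := by
  have inl_notMem : (Sum.inl a : X3CStrat m C) ∉ xDesired m C := fun ⟨_, h⟩ => Sum.inr_ne_inl h
  obtain ⟨_, ⟨q, rfl⟩, hq, hqa⟩ := exists_mem_undominated_dominates_of_notMem (i := 0) himpl
    (σ := fun _ => Sum.inr ⟨(j, a), ha⟩) (by simpa [Fin.forall_fin_two] using hund) inl_notMem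
  obtain rfl := eq_of_undominated_of_dominates_inl hU hV hcost ha hq hqa hund
  refine ⟨hq, hqa, fun l hlj hl hl_und => hlj ?_⟩
  have heq := eq_of_undominated_of_dominates_inl hU hV hcost hl hq hqa hl_und
  exact congrArg (·.1.1) heq.symm

end X3C

/-- with a zero-cost implementation `𝒱` of `O_1 × O_2`, if `c_j^{a_i}` is
undominated for player 2 in `G[𝒱]`, then (i) it is undominated for player 1, (ii) it
dominates `a_i` for player 1, and (iii) for every other set `C_l ∋ a_i`, the strategy
`c_l^{a_i}` is dominated for player 2. -/
theorem x3c_claim1 (m nh : ℕ) [NeZero m] (hm : m = 3 * nh)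
    (C : ZMod m → Finset (ZMod m))
    (hC : ∀ j : ZMod m, (C j).card = 3)
    (hocc : ∀ a : ZMod m, Set.ncard {j : ZMod m | a ∈ C j} = 3)
    (V : Fin 2 → (Fin 2 → X3CStrat m C) → ℝ)
    (hV : ∀ i σ, 0 ≤ V i σ)
    (himpl : UndomProfiles (fun i σ => xGame m C i σ + V i σ) ⊆
      rectSet (fun _ : Fin 2 => xDesired m C))
    (hcost : gameCost (xGame m C) V = 0)
    (j a : ZMod m) (ha : a ∈ C j)
    (hund : Undominated (fun i σ => xGame m C i σ + V i σ) (1 : Fin 2)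
      (Sum.inr ⟨(j, a), ha⟩)) :
    Undominated (fun i σ => xGame m C i σ + V i σ) (0 : Fin 2)
        (Sum.inr ⟨(j, a), ha⟩) ∧
      Dominates (fun i σ => xGame m C i σ + V i σ) (0 : Fin 2)
        (Sum.inr ⟨(j, a), ha⟩) (Sum.inl a) ∧
      ∀ l : ZMod m, l ≠ j → ∀ hl : a ∈ C l,
        ¬ Undominated (fun i σ => xGame m C i σ + V i σ) (1 : Fin 2)
          (Sum.inr ⟨(l, a), hl⟩) :=
  x3c_claim1_general (fun _ => rfl) hV himpl (hcost.trans_lt one_pos) ha hund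
end

section
/- Consider the degree-three game G constructed from an Exact Cover by 3-Sets instance (n̂, 𝒜, 𝒞) as described, with desired sets O_{a_i} = {T_{a_i}} for every element player a_i and O_{C_j} = {T_{C_j}, F_{C_j}} for every set player C_j. If (n̂, 𝒜, 𝒞) admits an exact cover, then for every real δ ≥ 0 there exists a payment promise 𝒱 such that 𝒳⋆_{G[𝒱]} ⊆ ∏_{i∈N} O_i and cost(𝒱) ≤ δ. -/
/-- The utilities of the degree-three graphical game: players are elements (left) and
sets (right), every player plays a Boolean (`true` = the `T`-strategy). An element
player `a` receives 1 iff it plays its `F`-strategy and the number of sets containing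
`a` that play their `T`-strategy is 0, 2 or 3; set players always receive 0. -/
def dGame (m : ℕ) [NeZero m] (C : ZMod m → Finset (ZMod m)) :
    (ZMod m ⊕ ZMod m) → ((ZMod m ⊕ ZMod m) → Bool) → ℝ :=
  fun p σ =>
    match p with
    | Sum.inl a =>
        if σ (Sum.inl a) = false ∧
            ((Finset.univ.filter fun j => a ∈ C j ∧ σ (Sum.inr j) = true).card = 0 ∨
             (Finset.univ.filter fun j => a ∈ C j ∧ σ (Sum.inr j) = true).card = 2 ∨
             (Finset.univ.filter fun j => a ∈ C j ∧ σ (Sum.inr j) = true).card = 3)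
        then 1 else 0
    | Sum.inr _ => 0

/-- The desired strategy sets: `O_{a_i} = {T_{a_i}}` for element players and
`O_{C_j} = {T_{C_j}, F_{C_j}}` for set players. -/
def dDesired (m : ℕ) : (ZMod m ⊕ ZMod m) → Set Bool :=
  fun p => match p with
  | Sum.inl _ => {true}
  | Sum.inr _ => Set.univ

theorem exists_forall_lt_add_of_finite {α β : Type*} [Finite α] [Finite β] (f : α → β → ℝ) :
    ∃ M, ∀ a x y, f a x < f a y + M := by
  obtain ⟨M, hM⟩ := (Set.finite_range fun p : α × β × β => f p.1 p.2.1 - f p.1 p.2.2).bddAbove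
  refine ⟨M + 1, fun a x y => ?_⟩
  have hdiff : f a x - f a y ≤ M := hM ⟨(a, x, y), rfl⟩
  linarith

section EnforcingPayment

variable {ι : Type*} {S : ι → Type*} {b : ∀ j, S j}

open Classical in
/-- The payment promise enforcing the profile `b`: a player following `b` is compensated with `M`
whenever somebody else deviates from `b`. As the player itself follows `b`, the latter amounts to
`σ ≠ b`. -/
noncomputable def enforcingPayment (b : ∀ j, S j) (M : ℝ) : ι → (∀ j, S j) → ℝ :=
  fun i σ => if σ i = b i ∧ σ ≠ b then M else 0

theorem enforcingPayment_nonneg {M : ℝ} (hM : 0 ≤ M) (i : ι) (σ : ∀ j, S j) :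
    0 ≤ enforcingPayment b M i σ := by
  unfold enforcingPayment
  split_ifs
  exacts [hM, le_rfl]

theorem enforcingPayment_self (b : ∀ j, S j) (M : ℝ) (i : ι) : enforcingPayment b M i b = 0 :=
  if_neg fun h => h.2 rfl

theorem enforcingPayment_of_ne {M : ℝ} {i : ι} {σ : ∀ j, S j} (h : σ i ≠ b i) :
    enforcingPayment b M i σ = 0 :=
  if_neg fun h' => h h'.1

theorem enforcingPayment_of_eq_of_ne {M : ℝ} {i : ι} {σ : ∀ j, S j} (hi : σ i = b i)
    (hσ : σ ≠ b) : enforcingPayment b M i σ = M :=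
  if_pos ⟨hi, hσ⟩

end EnforcingPayment

section Games

variable {ι : Type*} [DecidableEq ι] {S : ι → Type*} {U : ι → (∀ j, S j) → ℝ} {b : ∀ j, S j}

theorem Dominates.not_symm {i : ι} {x y : S i} (h : Dominates U i x y) : ¬ Dominates U i y x :=
  fun h' => let ⟨σ, hσ⟩ := h.2; (h'.1 σ).not_gt hσ

theorem undominated_iff_eq_of_forall_dominates {i : ι} {x : S i}
    (hx : ∀ y, y ≠ x → Dominates U i x y) {y : S i} : Undominated U i y ↔ y = x := by
  constructor
  · intro hy
    by_contra hne
    exact hy ⟨x, hx y hne⟩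
  · rintro rfl ⟨z, hz⟩
    by_cases hne : z = y
    · subst hne
      exact hz.not_symm hz
    · exact hz.not_symm (hx z hne)

theorem undomProfiles_eq_singleton_of_forall_dominates
    (hb : ∀ i x, x ≠ b i → Dominates U i (b i) x) : UndomProfiles U = {b} := by
  ext σ
  simp only [UndomProfiles, Set.mem_ofPred_eq, Set.mem_singleton_iff, funext_iff,
    fun i => undominated_iff_eq_of_forall_dominates (hb i)]

theorem gameCost_eq_sum_of_undomProfiles_eq_singleton [Fintype ι] {V : ι → (∀ j, S j) → ℝ}
    (hb : UndomProfiles (fun i σ => U i σ + V i σ) = {b}) : gameCost U V = ∑ i, V i b := by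
  rw [gameCost, hb, Set.image_singleton, csSup_singleton]

/-- `b` is a pure Nash equilibrium of the game with utilities `U`: no player gains by a unilateral
deviation. -/
def IsNashEquilibrium (U : ι → (∀ j, S j) → ℝ) (b : ∀ j, S j) : Prop :=
  ∀ i x, U i (Function.update b i x) ≤ U i b

theorem IsNashEquilibrium.dominates_enforcingPayment [Nontrivial ι] [∀ i, Nontrivial (S i)]
    (hb : IsNashEquilibrium U b) {M : ℝ} (hM : ∀ i σ τ, U i σ < U i τ + M) {i : ι} {x : S i}
    (hx : x ≠ b i) :
    Dominates (fun i σ => U i σ + enforcingPayment b M i σ) i (b i) x := by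
  have unpaid (σ : ∀ j, S j) : enforcingPayment b M i (Function.update σ i x) = 0 :=
    enforcingPayment_of_ne (by rwa [Function.update_self])
  have strict (σ : ∀ j, S j) (hσ : Function.update σ i (b i) ≠ b) :
      U i (Function.update σ i x) + enforcingPayment b M i (Function.update σ i x) <
        U i (Function.update σ i (b i)) +
          enforcingPayment b M i (Function.update σ i (b i)) := by
    rw [unpaid, add_zero, enforcingPayment_of_eq_of_ne (Function.update_self ..) hσ]
    exact hM ..
  refine ⟨fun σ => ?_, ?_⟩
  · by_cases hσ : Function.update σ i (b i) = b
    · have hdev : Function.update σ i x = Function.update b i x := by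
        rw [← hσ, Function.update_idem]
      simpa only [unpaid, hσ, enforcingPayment_self, add_zero, hdev] using hb i x
    · exact (strict σ hσ).le
  · obtain ⟨j, hji⟩ := exists_ne i
    obtain ⟨y, hy⟩ := exists_ne (b j)
    refine ⟨Function.update b j y, strict _ fun h => hy ?_⟩
    simpa only [Function.update_of_ne hji, Function.update_self] using congrFun h j

theorem IsNashEquilibrium.exists_payment_gameCost_eq_zero [Fintype ι] [Nontrivial ι]
    [∀ i, Finite (S i)] [∀ i, Nontrivial (S i)] (hb : IsNashEquilibrium U b) :
    ∃ V : ι → (∀ j, S j) → ℝ, (∀ i σ, 0 ≤ V i σ) ∧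
      UndomProfiles (fun i σ => U i σ + V i σ) = {b} ∧ gameCost U V = 0 := by
  obtain ⟨M, hM⟩ := exists_forall_lt_add_of_finite U
  obtain ⟨i⟩ : Nonempty ι := inferInstance
  have hM0 : 0 < M := (lt_add_iff_pos_right _).mp (hM i b b)
  have hundom := undomProfiles_eq_singleton_of_forall_dominates
    fun _ _ => hb.dominates_enforcingPayment hM
  refine ⟨enforcingPayment b M, enforcingPayment_nonneg hM0.le, hundom, ?_⟩
  rw [gameCost_eq_sum_of_undomProfiles_eq_singleton hundom]
  exact Finset.sum_eq_zero fun i _ => enforcingPayment_self b M i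

end Games

section ExactCover

theorem existsUnique_mem_of_sum_card_le {α β : Type*} [Fintype α] {C : β → Finset α}
    {S : Finset β} (hcov : ∀ a, ∃ j ∈ S, a ∈ C j)
    (hsum : ∑ j ∈ S, (C j).card ≤ Fintype.card α) (a : α) : ∃! j, j ∈ S ∧ a ∈ C j := by
  let toElement : (Σ j : S, C j) → α := fun p => p.2
  have hsurj : Function.Surjective toElement := fun a =>
    let ⟨j, hj, ha⟩ := hcov a
    ⟨⟨⟨j, hj⟩, ⟨a, ha⟩⟩, rfl⟩
  have hcard : Fintype.card (Σ j : S, C j) ≤ Fintype.card α := by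
    simpa only [Fintype.card_sigma, Fintype.card_coe, Finset.sum_coe_sort S fun j => (C j).card]
      using hsum
  have hinj : Function.Injective toElement :=
    ((Fintype.bijective_iff_surjective_and_card toElement).mpr
      ⟨hsurj, hcard.antisymm (Fintype.card_le_of_surjective _ hsurj)⟩).injective
  obtain ⟨j, hj, ha⟩ := hcov a
  refine ⟨j, ⟨hj, ha⟩, fun k ⟨hk, hak⟩ => ?_⟩
  have hpair := @hinj ⟨⟨k, hk⟩, ⟨a, hak⟩⟩ ⟨⟨j, hj⟩, ⟨a, ha⟩⟩ rfl
  exact congrArg (fun p => (p.1 : β)) hpair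

theorem IsExactCover.existsUnique_mem {m nh k : ℕ} [NeZero m] {C : ZMod m → Finset (ZMod m)}
    {S : Set (ZMod m)} (hS : IsExactCover m nh C S) (hm : m = k * nh)
    (hC : ∀ j ∈ S, (C j).card = k) (a : ZMod m) : ∃! j, j ∈ S ∧ a ∈ C j := by
  classical
  obtain ⟨hcard, hcov⟩ := hS
  have hsum : ∑ j ∈ S.toFinset, (C j).card ≤ Fintype.card (ZMod m) := by
    rw [Finset.sum_const_nat fun j hj => hC j (Set.mem_toFinset.mp hj),
      ← Set.ncard_eq_toFinset_card', hcard, ZMod.card, hm, mul_comm]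
  simpa only [Set.mem_toFinset] using
    existsUnique_mem_of_sum_card_le (by simpa only [Set.mem_toFinset] using hcov) hsum a

end ExactCover

section DegreeThreeGame

variable {m : ℕ}

open Classical in
/-- The profile of the degree-three game attached to a set `S` of set players: all elements play
`T`, and a set player plays `T` iff it belongs to `S`. -/
noncomputable def coverProfile (S : Set (ZMod m)) : ZMod m ⊕ ZMod m → Bool :=
  Sum.elim (fun _ => true) fun j => decide (j ∈ S)

theorem coverProfile_mem_rectSet (S : Set (ZMod m)) : coverProfile S ∈ rectSet (dDesired m) := by
  rintro (a | j)
  exacts [rfl, Set.mem_univ _]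

theorem dGame_inl_eq_zero_of_existsUnique [NeZero m] {C : ZMod m → Finset (ZMod m)} {a : ZMod m}
    {σ : ZMod m ⊕ ZMod m → Bool} (h : ∃! j, a ∈ C j ∧ σ (Sum.inr j) = true) :
    dGame m C (Sum.inl a) σ = 0 := by
  have hcount : (Finset.univ.filter fun j => a ∈ C j ∧ σ (Sum.inr j) = true).card = 1 := by
    simpa [Finset.card_eq_one, Finset.eq_singleton_iff_unique_mem, ExistsUnique] using h
  simp [dGame, hcount]

theorem isNashEquilibrium_coverProfile [NeZero m] {C : ZMod m → Finset (ZMod m)}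
    {S : Set (ZMod m)} (hS : ∀ a, ∃! j, j ∈ S ∧ a ∈ C j) :
    IsNashEquilibrium (dGame m C) (coverProfile S) := by
  rintro (a | j) x
  · have hunique : ∃! j, a ∈ C j ∧ coverProfile S (Sum.inr j) = true := by
      simpa [coverProfile, and_comm] using hS a
    have hdev : ∃! j, a ∈ C j ∧
        Function.update (coverProfile S) (Sum.inl a) x (Sum.inr j) = true := by
      simpa only [Function.update_of_ne Sum.inr_ne_inl] using hunique
    rw [dGame_inl_eq_zero_of_existsUnique hdev, dGame_inl_eq_zero_of_existsUnique hunique]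
  · exact le_rfl

theorem deg3_forward_general [NeZero m] (C : ZMod m → Finset (ZMod m))
    (hcover : ∃ S : Set (ZMod m), ∀ a, ∃! j, j ∈ S ∧ a ∈ C j) :
    ∃ V : (ZMod m ⊕ ZMod m) → ((ZMod m ⊕ ZMod m) → Bool) → ℝ,
      (∀ p σ, 0 ≤ V p σ) ∧
      UndomProfiles (fun p σ => dGame m C p σ + V p σ) ⊆ rectSet (dDesired m) ∧
      gameCost (dGame m C) V = 0 := by
  obtain ⟨S, hS⟩ := hcover
  have : Nontrivial (ZMod m ⊕ ZMod m) := ⟨Sum.inl 0, Sum.inr 0, Sum.inl_ne_inr⟩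
  obtain ⟨V, hnonneg, hundom, hcost⟩ :=
    (isNashEquilibrium_coverProfile hS).exists_payment_gameCost_eq_zero
  refine ⟨V, hnonneg, ?_, hcost⟩
  rw [hundom, Set.singleton_subset_iff]
  exact coverProfile_mem_rectSet S

end DegreeThreeGame

/-- if the X3C instance admits an exact cover, then for every budget
`δ ≥ 0` there is a payment promise implementing the desired region with cost at
most `δ` in the degree-three game. -/
theorem deg3_forward (m nh : ℕ) [NeZero m] (hm : m = 3 * nh)
    (C : ZMod m → Finset (ZMod m))
    (hC : ∀ j : ZMod m, (C j).card = 3)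
    (hocc : ∀ a : ZMod m, Set.ncard {j : ZMod m | a ∈ C j} = 3)
    (hcover : ∃ S : Set (ZMod m), IsExactCover m nh C S) :
    ∀ δ : ℝ, 0 ≤ δ →
      ∃ V : (ZMod m ⊕ ZMod m) → ((ZMod m ⊕ ZMod m) → Bool) → ℝ,
        (∀ p σ, 0 ≤ V p σ) ∧
        UndomProfiles (fun p σ => dGame m C p σ + V p σ) ⊆ rectSet (dDesired m) ∧
        gameCost (dGame m C) V ≤ δ := by
  obtain ⟨V, hnonneg, hsub, hcost⟩ := deg3_forward_general C
    (hcover.imp fun _ hS => hS.existsUnique_mem hm fun j _ => hC j)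
  exact fun δ hδ => ⟨V, hnonneg, hsub, hcost.trans_le hδ⟩
end

section
/- Let G = (N, 𝒳, 𝒰) be a finite game and 𝒪 = O_1 × ⋯ × O_n rectangular with each O_i nonempty. If a payment promise 𝒱 implements 𝒪 (i.e., 𝒳⋆_{G[𝒱]} ⊆ 𝒪), then there exists a family F = (F_1,…,F_n) ∈ ℱ such that for every player i, every o = (o_i, o₋ᵢ) ∈ 𝒪 and every x_i ∈ F_i⁻¹(o_i), V_i(o_i, o₋ᵢ) ≥ U_i(x_i, o₋ᵢ) − U_i(o_i, o₋ᵢ); consequently max_{o∈𝒪} Σ_{i∈N} V_i(o) ≥ min_{F∈ℱ} κ(F). -/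
/-- `F = (F_1, …, F_n)` is a valid family for the rectangular region `O`:
each `F_i` maps every strategy outside `O_i` into `O_i`
(its values on `O_i` are irrelevant). -/
def ValidF {ι : Type*} {S : ι → Type*} (O : ∀ i, Set (S i))
    (F : ∀ i, S i → S i) : Prop :=
  ∀ i : ι, ∀ x : S i, x ∉ O i → F i x ∈ O i

/-- `max(0, max_{x_i ∈ F_i⁻¹(o_i), x_i ∉ O_i} (U_i(x_i, o₋ᵢ) − U_i(o_i, o₋ᵢ)))`,
with the inner maximum over the empty set taken to be 0. -/
noncomputable def innerPay {ι : Type*} [DecidableEq ι] {S : ι → Type*}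
    (U : ι → (∀ j, S j) → ℝ) (O : ∀ i, Set (S i)) (F : ∀ i, S i → S i)
    (i : ι) (o : ∀ j, S j) : ℝ :=
  sSup (insert (0 : ℝ)
    {r | ∃ x : S i, x ∉ O i ∧ F i x = o i ∧
      r = U i (Function.update o i x) - U i o})

/-- `κ(F) = max_{o ∈ 𝒪} Σ_{i ∈ N} innerPay i o`. -/
noncomputable def kappa {ι : Type*} [DecidableEq ι] [Fintype ι] {S : ι → Type*}
    (U : ι → (∀ j, S j) → ℝ) (O : ∀ i, Set (S i)) (F : ∀ i, S i → S i) : ℝ :=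
  sSup ((fun o => ∑ i, innerPay U O F i o) '' rectSet O)

/-- The worst-case payment over the region `O`: `max_{o ∈ 𝒪} Σ_i V_i(o)`. -/
noncomputable def maxPay {ι : Type*} [Fintype ι] {S : ι → Type*}
    (V : ι → (∀ j, S j) → ℝ) (O : ∀ i, Set (S i)) : ℝ :=
  sSup ((fun o => ∑ i, V i o) '' rectSet O)

section StrategyPayoff

variable {ι : Type*} [DecidableEq ι] {S : ι → Type*}

/-- The payoff function of the strategy `x` of player `i`. It is defined on full profiles, whose
`i`-th entry is overwritten by `x`, so that domination becomes the pointwise strict order. -/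
def strategyPayoff (U : ι → (∀ j, S j) → ℝ) (i : ι) (x : S i) : (∀ j, S j) → ℝ :=
  fun σ => U i (Function.update σ i x)

theorem dominates_iff_strategyPayoff_lt {U : ι → (∀ j, S j) → ℝ} {i : ι} {x y : S i} :
    Dominates U i x y ↔ strategyPayoff U i y < strategyPayoff U i x :=
  Pi.lt_def.symm

theorem undominated_iff_maximal {U : ι → (∀ j, S j) → ℝ} {i : ι} {x : S i} :
    Undominated U i x ↔
      Maximal (· ∈ Set.range (strategyPayoff U i)) (strategyPayoff U i x) := by
  simp only [Undominated, dominates_iff_strategyPayoff_lt, not_exists, maximal_iff_forall_gt,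
    Set.mem_range_self, true_and, imp_not_comm (b := _ ∈ _), Set.forall_mem_range]

theorem exists_undominated_strategyPayoff_le (U : ι → (∀ j, S j) → ℝ) (i : ι) [Finite (S i)]
    (x : S i) :
    ∃ y, Undominated U i y ∧ strategyPayoff U i x ≤ strategyPayoff U i y := by
  obtain ⟨_, hle, hmax⟩ :=
    (Set.finite_range (strategyPayoff U i)).exists_le_maximal (Set.mem_range_self x)
  obtain ⟨y, rfl⟩ := hmax.prop
  exact ⟨y, undominated_iff_maximal.2 hmax, hle⟩

theorem sub_le_of_strategyPayoff_add_le {U V : ι → (∀ j, S j) → ℝ} {i : ι} {o : ∀ j, S j}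
    {x : S i} (hV : 0 ≤ V i (Function.update o i x))
    (hle : strategyPayoff (fun i σ => U i σ + V i σ) i x ≤
      strategyPayoff (fun i σ => U i σ + V i σ) i (o i)) :
    U i (Function.update o i x) - U i o ≤ V i o := by
  have hadd : U i (Function.update o i x) + V i (Function.update o i x) ≤ U i o + V i o := by
    simpa only [strategyPayoff, Function.update_eq_self] using hle o
  linarith

end StrategyPayoff

section Implementation

variable {ι : Type*} [DecidableEq ι] {S : ι → Type*} [∀ i, Finite (S i)] [∀ i, Nonempty (S i)]
  (U : ι → (∀ j, S j) → ℝ)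

theorem undomProfiles_nonempty : (UndomProfiles U).Nonempty := by
  choose σ hσ _ using fun i =>
    exists_undominated_strategyPayoff_le U i (Classical.arbitrary (S i))
  exact ⟨σ, hσ⟩

variable {U} {O : ∀ i, Set (S i)}

theorem Undominated.mem_of_undomProfiles_subset_rectSet {i : ι} {x : S i}
    (hx : Undominated U i x) (hsub : UndomProfiles U ⊆ rectSet O) : x ∈ O i := by
  obtain ⟨σ, hσ⟩ := undomProfiles_nonempty U
  have hupdate : Function.update σ i x ∈ UndomProfiles U :=
    (Function.forall_update_iff σ fun j y => Undominated U j y).2 ⟨hx, fun j _ => hσ j⟩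
  simpa only [Function.update_self] using hsub hupdate i

theorem exists_validF_strategyPayoff_le (hsub : UndomProfiles U ⊆ rectSet O) :
    ∃ F, ValidF O F ∧ ∀ i x, strategyPayoff U i x ≤ strategyPayoff U i (F i x) := by
  choose F hund hle using fun i => exists_undominated_strategyPayoff_le U i
  exact ⟨F, fun i x _ => (hund i x).mem_of_undomProfiles_subset_rectSet hsub, hle⟩

end Implementation

section Kappa

variable {ι : Type*} [DecidableEq ι] {S : ι → Type*} (U : ι → (∀ j, S j) → ℝ)
  (O : ∀ i, Set (S i)) (F : ∀ i, S i → S i)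

theorem innerPay_nonneg (i : ι) (o : ∀ j, S j) : 0 ≤ innerPay U O F i o :=
  Real.sSup_nonneg' ⟨0, Set.mem_insert _ _, le_rfl⟩

theorem kappa_nonneg [Fintype ι] : 0 ≤ kappa U O F := by
  refine Real.sSup_nonneg ?_
  rintro _ ⟨o, -, rfl⟩
  exact Finset.sum_nonneg fun i _ => innerPay_nonneg U O F i o

variable {U O F}

theorem innerPay_le {i : ι} {o : ∀ j, S j} {c : ℝ} (hc : 0 ≤ c)
    (hpay : ∀ x ∉ O i, F i x = o i → U i (Function.update o i x) - U i o ≤ c) :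
    innerPay U O F i o ≤ c := by
  refine csSup_le (Set.insert_nonempty _ _) ?_
  rintro _ (rfl | ⟨x, hxO, hFx, rfl⟩)
  · exact hc
  · exact hpay x hxO hFx

theorem sInf_kappa_le [Fintype ι] (hF : ValidF O F) :
    sInf {k : ℝ | ∃ F' : ∀ i, S i → S i, ValidF O F' ∧ k = kappa U O F'} ≤ kappa U O F := by
  refine csInf_le ⟨0, ?_⟩ ⟨F, hF, rfl⟩
  rintro _ ⟨F', -, rfl⟩
  exact kappa_nonneg U O F'

theorem kappa_le_maxPay [Fintype ι] {V : ι → (∀ j, S j) → ℝ}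
    (hbdd : BddAbove ((fun o => ∑ i, V i o) '' rectSet O))
    (hle : ∀ o ∈ rectSet O, ∀ i, innerPay U O F i o ≤ V i o) :
    kappa U O F ≤ maxPay V O := by
  rw [Set.image_eq_range] at hbdd
  simp only [kappa, maxPay, sSup_image']
  exact ciSup_mono hbdd fun o => Finset.sum_le_sum fun i _ => hle o o.2 i

end Kappa

/-- if `V` implements the rectangular region `O`, then there is a valid
family `F` such that for every player `i`, every `o ∈ 𝒪` and every `x_i ∈ F_i⁻¹(o_i)`,
`V_i(o) ≥ U_i(x_i, o₋ᵢ) − U_i(o_i, o₋ᵢ)`; consequently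
`max_{o ∈ 𝒪} Σ_i V_i(o) ≥ min_{F ∈ ℱ} κ(F)`. -/
theorem implementation_lower_bound {ι : Type*} [DecidableEq ι] [Fintype ι]
    {S : ι → Type*} [∀ i, Fintype (S i)] [∀ i, Nonempty (S i)]
    (U : ι → (∀ j, S j) → ℝ) (O : ∀ i, Set (S i)) (hO : ∀ i, (O i).Nonempty)
    (V : ι → (∀ j, S j) → ℝ) (hV : ∀ i σ, 0 ≤ V i σ)
    (himpl : UndomProfiles (fun i σ => U i σ + V i σ) ⊆ rectSet O) :
    (∃ F : ∀ i, S i → S i, ValidF O F ∧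
        ∀ i : ι, ∀ o ∈ rectSet O, ∀ x : S i, x ∉ O i → F i x = o i →
          U i (Function.update o i x) - U i o ≤ V i o) ∧
      sInf {k : ℝ | ∃ F : ∀ i, S i → S i, ValidF O F ∧ k = kappa U O F} ≤
        maxPay V O := by
  obtain ⟨F, hF, hle⟩ := exists_validF_strategyPayoff_le himpl
  have hpay : ∀ i : ι, ∀ o ∈ rectSet O, ∀ x : S i, x ∉ O i → F i x = o i →
      U i (Function.update o i x) - U i o ≤ V i o := fun i _ _ x _ hFx =>
    sub_le_of_strategyPayoff_add_le (hV i _) (hFx ▸ hle i x)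
  refine ⟨⟨F, hF, hpay⟩, (sInf_kappa_le hF).trans (kappa_le_maxPay (Set.toFinite _).bddAbove ?_)⟩
  exact fun o ho i => innerPay_le (hV i o) (hpay i o ho)
end
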